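/- Let V be a subspace of ℂ^l (viewed as degree-one part of the Orlik–Solomon algebra of an arrangement in ℂP^n) spanned by rows of a matrix M with columns v_1,…,v_l. If V is n-isotropic (the wedge of any n elements of V vanishes in the OS algebra), then for every complete flag S_n ⊇ ⋯ ⊇ S_1 in the intersection lattice, the decorating vectors v_{S_k} := Σ_{H_i ⊇ S_k} v_i span a subspace of ℂ^n of dimension strictly less than n; conversely if this flag condition holds then V is n-isotropic. -/

import Mathlib

noncomputable section
open ExteriorAlgebra

/-- The canonical degree-one generator `x_i` of the exterior algebra of `ℂ^l`. -/
def xGen (l : ℕ) (i : Fin l) : ExteriorAlgebra ℂ (Fin l → ℂ) :=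
  ι ℂ (Pi.single i (1 : ℂ))

/-- The wedge monomial `x_{f 0} ∧ ⋯ ∧ x_{f (m-1)}`. -/
def wedgeMon (l m : ℕ) (f : Fin m → Fin l) : ExteriorAlgebra ℂ (Fin l → ℂ) :=
  (List.ofFn fun k => xGen l (f k)).prod

/-- The Orlik–Solomon boundary `∂(x_{f 0} ∧ ⋯ ∧ x_{f m})`. -/
def osBoundary (l m : ℕ) (f : Fin (m + 1) → Fin l) : ExteriorAlgebra ℂ (Fin l → ℂ) :=
  ∑ j : Fin (m + 1), ((-1 : ℂ) ^ (j : ℕ)) • wedgeMon l m (f ∘ j.succAbove)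

/-- The defining relations of the Orlik–Solomon algebra of the (projective, modelled as
central in `ℂ^{n+1}`) arrangement given by the linear forms `α`: boundaries of dependent
monomials, and monomials over families with empty (projective) intersection. -/
def osRel (n l : ℕ) (α : Fin l → ((Fin (n + 1) → ℂ) →ₗ[ℂ] ℂ)) :
    ExteriorAlgebra ℂ (Fin l → ℂ) → ExteriorAlgebra ℂ (Fin l → ℂ) → Prop :=
  fun p q =>
    ((∃ (m : ℕ) (f : Fin (m + 1) → Fin l), ¬ LinearIndependent ℂ (fun k => α (f k)) ∧
        p = osBoundary l m f) ∨
     (∃ (m : ℕ) (f : Fin m → Fin l), (⨅ k, LinearMap.ker (α (f k))) = ⊥ ∧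
        p = wedgeMon l m f)) ∧ q = 0

/-- The Orlik–Solomon algebra: the exterior algebra modulo the two-sided ideal generated
by the Orlik–Solomon relations. -/
def OSAlg (n l : ℕ) (α : Fin l → ((Fin (n + 1) → ℂ) →ₗ[ℂ] ℂ)) : Type :=
  RingQuot (osRel n l α)

instance (n l : ℕ) (α : Fin l → ((Fin (n + 1) → ℂ) →ₗ[ℂ] ℂ)) : Ring (OSAlg n l α) :=
  inferInstanceAs (Ring (RingQuot (osRel n l α)))

instance (n l : ℕ) (α : Fin l → ((Fin (n + 1) → ℂ) →ₗ[ℂ] ℂ)) : Algebra ℂ (OSAlg n l α) :=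
  inferInstanceAs (Algebra ℂ (RingQuot (osRel n l α)))

/-- The projection from the exterior algebra onto the Orlik–Solomon algebra. -/
def osProj (n l : ℕ) (α : Fin l → ((Fin (n + 1) → ℂ) →ₗ[ℂ] ℂ)) :
    ExteriorAlgebra ℂ (Fin l → ℂ) →ₐ[ℂ] OSAlg n l α :=
  RingQuot.mkAlgHom ℂ (osRel n l α)

/-- The flat determined by a set of hyperplane indices. -/
def arrFlat (n l : ℕ) (α : Fin l → ((Fin (n + 1) → ℂ) →ₗ[ℂ] ℂ)) (S : Finset (Fin l)) :
    Submodule ℂ (Fin (n + 1) → ℂ) :=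
  ⨅ i ∈ S, LinearMap.ker (α i)

/-- The decoration `v_P = Σ_{H_i ⊇ P} v_i` of a flat `P`, where `v_j` is the `j`-th
column of the coefficient matrix `M`. -/
def flatVec (n l : ℕ) (α : Fin l → ((Fin (n + 1) → ℂ) →ₗ[ℂ] ℂ))
    (M : Matrix (Fin n) (Fin l) ℂ) (P : Submodule ℂ (Fin (n + 1) → ℂ)) : Fin n → ℂ :=
  open Classical in
  ∑ i ∈ Finset.univ.filter (fun i => P ≤ LinearMap.ker (α i)), (fun r => M r i)

/-! Given a complete flag with decorations `v_k`, send each generator `x_i` to the indicator vector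
of the flats of the flag lying in `H_i`. This kills the Orlik–Solomon relations: if the vectors
attached to several hyperplanes are distinct, then these hyperplanes first contain the flag at
distinct steps and are therefore independent. The rows of `M` go to the rows of the matrix with
columns `v_k`, so isotropy forces its determinant to vanish.

Conversely, `x_f = x_i ∂x_f` in the Orlik–Solomon algebra as soon as `H_i` contains the intersection
`X` of the hyperplanes of `f`. Choosing `i` as a function of `X` only and iterating, `x_f` becomes
the signed sum, over the orderings of `f`, of monomials that depend only on the flag of partial
intersections. In the wedge of the rows of `M`, the monomial of a flag therefore has as coefficient
a determinant whose columns are the differences `v_k - v_{k+1}`. -/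

section Preliminaries

theorem covBy_inf_eq_iff {L : Type*} [SemilatticeInf L] {a b c : L} (hab : a ⋖ b) :
    b ⊓ c = a ↔ a ≤ c ∧ ¬ b ≤ c := by
  constructor
  · rintro rfl
    exact ⟨inf_le_right, fun hbc => hab.lt.ne (inf_eq_left.2 hbc)⟩
  · rintro ⟨hac, hbc⟩
    exact (hab.eq_or_eq (le_inf hab.le hac) inf_le_left).resolve_right
      fun h => hbc (inf_eq_left.1 h)

theorem monotone_snoc_top {L : Type*} [Preorder L] [OrderTop L] {m : ℕ} {F : Fin m → L}
    (hF : Monotone F) : Monotone (Fin.snoc F ⊤ : Fin (m + 1) → L) := by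
  intro k k' hkk'
  cases k' using Fin.lastCases with
  | last => simp
  | cast k' =>
    obtain ⟨k, rfl⟩ := Fin.exists_castSucc_eq.2 (hkk'.trans_lt (Fin.castSucc_lt_last k')).ne
    simpa using hF (Fin.castSucc_le_castSucc_iff.1 hkk')

theorem snoc_top_ne_bot {L : Type*} [PartialOrder L] [BoundedOrder L] [Nontrivial L] {m : ℕ}
    {F : Fin m → L} (hF : ∀ k, F k ≠ ⊥) (k : Fin (m + 1)) :
    (Fin.snoc F ⊤ : Fin (m + 1) → L) k ≠ ⊥ := by
  cases k using Fin.lastCases <;> simp [hF]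

variable {K V : Type*} [Field K] [AddCommGroup V] [Module K V]

theorem isCoatom_ker_of_ne_zero {a : V →ₗ[K] K} (ha : a ≠ 0) : IsCoatom (LinearMap.ker a) :=
  LinearMap.isCoatom_ker_of_surjective (LinearMap.surjective ha)

theorem ne_zero_of_not_le_ker {P : Submodule K V} {a : V →ₗ[K] K}
    (h : ¬ P ≤ LinearMap.ker a) : a ≠ 0 := by
  rintro rfl
  simp at h

theorem sup_ker_eq_top {P : Submodule K V} {a : V →ₗ[K] K} (h : ¬ P ≤ LinearMap.ker a) :
    P ⊔ LinearMap.ker a = ⊤ :=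
  (isCoatom_ker_of_ne_zero (ne_zero_of_not_le_ker h)).2 _ (right_lt_sup.2 h)

theorem inf_ker_covBy {P : Submodule K V} {a : V →ₗ[K] K} (h : ¬ P ≤ LinearMap.ker a) :
    P ⊓ LinearMap.ker a ⋖ P := by
  refine inf_covBy_of_covBy_sup_right ?_
  rw [sup_ker_eq_top h]
  exact (isCoatom_ker_of_ne_zero (ne_zero_of_not_le_ker h)).covBy_top

theorem finrank_inf_ker_add_one [FiniteDimensional K V] {P : Submodule K V} {a : V →ₗ[K] K}
    (h : ¬ P ≤ LinearMap.ker a) :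
    Module.finrank K ↥(P ⊓ LinearMap.ker a) + 1 = Module.finrank K P := by
  have hker := Module.Dual.finrank_ker_add_one_of_ne_zero (ne_zero_of_not_le_ker h)
  have hsum := Submodule.finrank_sup_add_finrank_inf_eq P (LinearMap.ker a)
  rw [sup_ker_eq_top h, finrank_top] at hsum
  omega

theorem mem_span_range_iff_iInf_ker_le_ker {I : Type*} [Finite I] {a : I → V →ₗ[K] K}
    {b : V →ₗ[K] K} :
    b ∈ Submodule.span K (Set.range a) ↔ ⨅ i, LinearMap.ker (a i) ≤ LinearMap.ker b := by
  refine ⟨fun hb x hx => ?_, mem_span_of_iInf_ker_le_ker⟩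
  have hspan : Submodule.span K (Set.range a) ≤
      LinearMap.ker (LinearMap.applyₗ x : (V →ₗ[K] K) →ₗ[K] K) := by
    rw [Submodule.span_le]
    rintro _ ⟨i, rfl⟩
    exact (Submodule.mem_iInf _).1 hx i
  exact hspan hb

theorem linearIndependent_of_filtration {I T : Type*} [LinearOrder T] (a : I → V →ₗ[K] K)
    {t : I → T} (ht : Function.Injective t) (G : T → Submodule K V)
    (hself : ∀ i, ¬ G (t i) ≤ LinearMap.ker (a i))
    (hlt : ∀ i j, t i < t j → G (t i) ≤ LinearMap.ker (a j)) :
    LinearIndependent K a := by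
  classical
  rw [linearIndependent_iff']
  intro s g hg
  by_contra! hne
  obtain ⟨i₀, hi₀, hgi₀⟩ := hne
  obtain ⟨i, hi, hmin⟩ := (s.filter (g · ≠ 0)).exists_min_image t
    ⟨i₀, Finset.mem_filter.2 ⟨hi₀, hgi₀⟩⟩
  rw [Finset.mem_filter] at hi
  refine hself i fun x hx => ?_
  have hothers : ∀ j ∈ s, j ≠ i → (g j • a j) x = 0 := by
    intro j hj hji
    by_cases hgj : g j = 0
    · simp [hgj]
    · have htij : t i < t j :=
        (hmin j (Finset.mem_filter.2 ⟨hj, hgj⟩)).lt_of_ne fun h => hji (ht h).symm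
      have hajx : a j x = 0 := hlt i j htij hx
      simp [hajx]
  have hgx : g i * a i x = 0 := by
    have hsum := LinearMap.congr_fun hg x
    rwa [LinearMap.sum_apply, Finset.sum_eq_single_of_mem i hi.1 hothers] at hsum
  exact (mul_eq_zero.1 hgx).resolve_left hi.2

theorem exists_forall_le_ker_iff_lt {a : V →ₗ[K] K} (ha : a ≠ 0) {m : ℕ}
    {G : Fin (m + 1) → Submodule K V} (hG : Monotone G) (hlast : G (Fin.last m) = ⊤) :
    ∃ t, ∀ k, G k ≤ LinearMap.ker a ↔ k < t := by
  have hne : {k | ¬ G k ≤ LinearMap.ker a}.Nonempty :=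
    ⟨Fin.last m, by simpa [hlast, top_le_iff, LinearMap.ker_eq_top] using ha⟩
  obtain ⟨t, ht, hmin⟩ : ∃ t, IsLeast {k | ¬ G k ≤ LinearMap.ker a} t := ⟨_, isLeast_csInf hne⟩
  refine ⟨t, fun k => ⟨fun hk => ?_, fun hkt => ?_⟩⟩
  · exact lt_of_not_ge fun htk => ht ((hG htk).trans hk)
  · exact not_not.1 fun hk => hkt.not_ge (hmin hk)

theorem finrank_range_lt_card_iff_det_eq_zero {I : Type*} [Fintype I] [DecidableEq I]
    (v : I → I → K) :
    Set.finrank K (Set.range v) < Fintype.card I ↔ (Matrix.of v).det = 0 := by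
  have hrow : LinearIndependent K v ↔ (Matrix.of v).det ≠ 0 := by
    rw [← isUnit_iff_ne_zero, ← Matrix.isUnit_iff_isUnit_det]
    exact Matrix.linearIndependent_rows_iff_isUnit (A := Matrix.of v)
  rw [← not_le, ← linearIndependent_iff_card_le_finrank_span, hrow, not_not]

end Preliminaries

section Alternating

variable {R V N : Type*} [CommRing R] [AddCommGroup V] [Module R V] [AddCommGroup N] [Module R N]

theorem sum_neg_one_pow_smul_map_comp_succAbove_eq_zero {m : ℕ} (g : V [⋀^Fin m]→ₗ[R] N)
    {v : Fin (m + 1) → V} (hv : ¬ Function.Injective v) :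
    ∑ j : Fin (m + 1), (-1 : R) ^ (j : ℕ) • g (v ∘ j.succAbove) = 0 := by
  obtain ⟨a, b, hab, hne⟩ : ∃ a b, v a = v b ∧ a ≠ b := by
    simpa [Function.Injective] using hv
  have hsign : ∀ (j : Fin (m + 1)) (x : N), (-1 : R) ^ (j : ℕ) • x = (-1 : ℤ) ^ (j : ℕ) • x :=
    fun j x => by rw [← Int.cast_smul_eq_zsmul R]; push_cast; rfl
  simp only [hsign]
  change ∑ j : Fin (m + 1), (-1 : ℤ) ^ (j : ℕ) • g (j.removeNth v) = 0
  rw [Fintype.sum_eq_add a b hne, g.neg_one_pow_smul_map_removeNth_add_eq_zero_of_eq hab hne]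
  rintro k ⟨hka, hkb⟩
  obtain ⟨a, rfl⟩ := Fin.exists_succAbove_eq hka.symm
  obtain ⟨b, rfl⟩ := Fin.exists_succAbove_eq hkb.symm
  rw [g.map_eq_zero_of_eq _ hab (ne_of_apply_ne _ hne), smul_zero]

theorem alternatingMap_apply_eq_zero_of_ιMulti_eq_zero {m : ℕ} {v : Fin m → V}
    (hv : ιMulti R m v = 0) (g : V [⋀^Fin m]→ₗ[R] N) : g v = 0 := by
  have hv' : exteriorPower.ιMulti R m v = 0 := Subtype.ext hv
  rw [← exteriorPower.alternatingMapLinearEquiv_apply_ιMulti g v, hv', map_zero]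

theorem alternatingMap_apply_eq_zero_of_mem_span {I : Type*} [Finite I] (g : V [⋀^I]→ₗ[R] N)
    {v w : I → V} (hv : g v = 0) (hw : ∀ i, w i ∈ Submodule.span R (Set.range v)) : g w = 0 := by
  classical
  have := Fintype.ofFinite I
  have hzero : g.compLinearMap (Fintype.linearCombination R v) = 0 := by
    refine Module.Basis.ext_alternating (Pi.basisFun R I) fun σ hσ => ?_
    have hperm := g.map_perm v (Equiv.ofBijective σ (Finite.injective_iff_bijective.1 hσ))
    simpa [hv, Function.comp_def, Fintype.linearCombination_apply_single] using hperm
  simp only [← Fintype.range_linearCombination, LinearMap.mem_range] at hw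
  choose c hc using hw
  obtain rfl : Fintype.linearCombination R v ∘ c = w := funext hc
  exact DFunLike.congr_fun hzero c

theorem multilinearMap_apply_eq_sum_prod_smul {m : ℕ} {J : Type*} [Fintype J] [DecidableEq J]
    (g : MultilinearMap R (fun _ : Fin m => J → R) N) (w : Fin m → J → R) :
    g w = ∑ f : Fin m → J, (∏ i, w i (f i)) • g fun i => Pi.single (f i) 1 := by
  have hw : w = fun i => ∑ j, w i j • (Pi.single j (1 : R) : J → R) :=
    funext fun i => pi_eq_sum_univ' (w i)
  conv_lhs => rw [hw]
  rw [g.map_sum]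
  exact Finset.sum_congr rfl fun f _ => g.map_smul_univ _ _

theorem sum_perm_succ {m : ℕ} {T : Type*} (f : Fin (m + 1) → T) (E : (Fin m → T) → N) :
    ∑ τ : Equiv.Perm (Fin (m + 1)), ((τ.sign : ℤ) : R) • E (f ∘ τ ∘ Fin.succ) =
      ∑ j : Fin (m + 1), (-1 : R) ^ (j : ℕ) •
        ∑ σ : Equiv.Perm (Fin m), ((σ.sign : ℤ) : R) • E (f ∘ j.succAbove ∘ σ) := by
  let e : Fin (m + 1) × Equiv.Perm (Fin m) → Equiv.Perm (Fin (m + 1)) := fun p =>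
    p.1.cycleRange.symm * Equiv.Perm.decomposeFin.symm (0, p.2)
  have he_zero : ∀ p, e p 0 = p.1 := fun p => by simp [e]
  have he_succ : ∀ p, e p ∘ Fin.succ = p.1.succAbove ∘ p.2 := fun p => by ext; simp [e]
  have he_sign : ∀ p, ((e p).sign : ℤ) = (-1) ^ (p.1 : ℕ) * (p.2.sign : ℤ) := fun p => by
    simp [e, Fin.sign_cycleRange]
  have he_inj : Function.Injective e := by
    rintro ⟨j, σ⟩ ⟨j', σ'⟩ h
    obtain rfl : j = j' := by simpa [he_zero] using congrArg (· 0) h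
    simpa [e] using h
  have he : Function.Bijective e :=
    (Fintype.bijective_iff_injective_and_card e).2
      ⟨he_inj, Fintype.card_congr Equiv.Perm.decomposeFin.symm⟩
  rw [← he.sum_comp, Fintype.sum_prod_type]
  simp only [he_sign, he_succ, Finset.smul_sum, smul_smul, Int.cast_mul, Int.cast_pow,
    Int.cast_neg, Int.cast_one]

theorem sum_prod_smul_sum_perm {m J : Type*} [Fintype m] [DecidableEq m] [Fintype J]
    (w : Matrix m J R) (E : (m → J) → N) :
    ∑ f : m → J, (∏ i, w i (f i)) • ∑ σ : Equiv.Perm m, ((σ.sign : ℤ) : R) • E (f ∘ σ) =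
      ∑ f : m → J, (w.submatrix id f).det • E f := by
  classical
  have hreindex : ∀ σ : Equiv.Perm m,
      ∑ f : m → J, (∏ i, w i (f i)) • ((σ.sign : ℤ) : R) • E (f ∘ σ) =
        ∑ f : m → J, (((σ.sign : ℤ) : R) * ∏ i, w (σ i) (f i)) • E f := by
    intro σ
    refine Fintype.sum_equiv (σ.symm.arrowCongr (Equiv.refl J)) _ _ fun f => ?_
    have hf : σ.symm.arrowCongr (Equiv.refl J) f = f ∘ σ := by ext; simp
    rw [hf, smul_smul, mul_comm, ← Equiv.prod_comp σ]
    rfl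
  simp only [Finset.smul_sum]
  rw [Finset.sum_comm, Finset.sum_congr rfl fun σ _ => hreindex σ, Finset.sum_comm]
  refine Finset.sum_congr rfl fun f _ => ?_
  rw [← Finset.sum_smul, Matrix.det_apply']
  simp only [Matrix.submatrix_apply, id]

theorem sum_piFinset_det_submatrix {m J : Type*} [Fintype m] [DecidableEq m] (M : Matrix m J R)
    (s : m → Finset J) :
    ∑ f ∈ Fintype.piFinset s, (M.submatrix id f).det =
      (Matrix.of fun k => ∑ i ∈ s k, M.col i).det := by
  have hexpand := (Matrix.detRowAlternating (n := m) (R := R)).toMultilinearMap.map_sum_finset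
    (fun _ i => M.col i) s
  refine (Finset.sum_congr rfl fun f _ => ?_).trans hexpand.symm
  exact (Matrix.det_transpose _).symm

end Alternating

section KerFlag

variable {K V : Type*} [Field K] [AddCommGroup V] [Module K V] {m : ℕ}

/-- The chain of partial intersections of the kernels of `a 0, …, a (m - 1)`: its `k`-th
term intersects the kernels from position `k` on, so the chain increases from the intersection of
all of them, at `0`, to the whole space, at `Fin.last m`. -/
def kerFlag (a : Fin m → V →ₗ[K] K) (k : Fin (m + 1)) : Submodule K V :=
  ⨅ j : Fin m, ⨅ _ : k ≤ j.castSucc, LinearMap.ker (a j)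

theorem mem_kerFlag {a : Fin m → V →ₗ[K] K} {k : Fin (m + 1)} {x : V} :
    x ∈ kerFlag a k ↔ ∀ j : Fin m, k ≤ j.castSucc → a j x = 0 := by
  simp only [kerFlag, Submodule.mem_iInf, LinearMap.mem_ker]

theorem kerFlag_mono (a : Fin m → V →ₗ[K] K) : Monotone (kerFlag a) :=
  fun _ _ hk _ hx => mem_kerFlag.2 fun j hj => mem_kerFlag.1 hx j (hk.trans hj)

theorem kerFlag_last (a : Fin m → V →ₗ[K] K) : kerFlag a (Fin.last m) = ⊤ :=
  eq_top_iff.2 fun _ _ => mem_kerFlag.2 fun j hj => absurd hj (Fin.castSucc_lt_last j).not_ge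

theorem kerFlag_zero (a : Fin m → V →ₗ[K] K) : kerFlag a 0 = ⨅ j, LinearMap.ker (a j) := by
  simp [kerFlag]

theorem kerFlag_zero_le_ker (a : Fin m → V →ₗ[K] K) (j : Fin m) :
    kerFlag a 0 ≤ LinearMap.ker (a j) :=
  (kerFlag_zero a).trans_le (iInf_le _ j)

theorem kerFlag_succ (a : Fin (m + 1) → V →ₗ[K] K) (k : Fin (m + 1)) :
    kerFlag a k.succ = kerFlag (a ∘ Fin.succ) k := by
  ext x
  simp [mem_kerFlag, Fin.forall_fin_succ, Fin.le_castSucc_iff]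

theorem kerFlag_castSucc (a : Fin m → V →ₗ[K] K) (k : Fin m) :
    kerFlag a k.castSucc = kerFlag a k.succ ⊓ LinearMap.ker (a k) := by
  ext x
  simp only [Submodule.mem_inf, mem_kerFlag, LinearMap.mem_ker, Fin.castSucc_le_castSucc_iff,
    Fin.succ_le_castSucc_iff]
  refine ⟨fun h => ⟨fun j hj => h j hj.le, h k le_rfl⟩, fun h j hj => ?_⟩
  rcases hj.eq_or_lt with rfl | hj
  exacts [h.2, h.1 j hj]

theorem kerFlag_eq_iff (a : Fin m → V →ₗ[K] K) {F : Fin (m + 1) → Submodule K V}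
    (hF : F (Fin.last m) = ⊤) :
    kerFlag a = F ↔ ∀ k : Fin m, F k.succ ⊓ LinearMap.ker (a k) = F k.castSucc := by
  refine ⟨?_, fun h => funext fun k => ?_⟩
  · rintro rfl k
    exact (kerFlag_castSucc a k).symm
  · induction k using Fin.reverseInduction with
    | last => rw [kerFlag_last, hF]
    | cast k ih => rw [kerFlag_castSucc, ih, h]

theorem linearIndependent_iff_kerFlag_not_le {a : Fin m → V →ₗ[K] K} :
    LinearIndependent K a ↔ ∀ k : Fin m, ¬ kerFlag a k.succ ≤ LinearMap.ker (a k) := by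
  induction m with
  | zero => simp
  | succ m ih =>
    rw [← Fin.cons_self_tail a, linearIndependent_finCons, Fin.cons_self_tail, ih,
      mem_span_range_iff_iInf_ker_le_ker, ← kerFlag_zero, Fin.forall_fin_succ, and_comm]
    simp only [kerFlag_succ]
    rfl

theorem linearIndependent_iff_kerFlag_covBy {a : Fin m → V →ₗ[K] K} :
    LinearIndependent K a ↔ ∀ k : Fin m, kerFlag a k.castSucc ⋖ kerFlag a k.succ := by
  rw [linearIndependent_iff_kerFlag_not_le]
  refine forall_congr' fun k => ?_
  rw [kerFlag_castSucc]
  exact ⟨inf_ker_covBy, fun h hle => h.lt.ne (inf_eq_left.2 hle)⟩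

theorem finrank_kerFlag_add [FiniteDimensional K V] {a : Fin m → V →ₗ[K] K}
    (ha : LinearIndependent K a) (k : Fin (m + 1)) :
    Module.finrank K (kerFlag a k) + m = Module.finrank K V + k := by
  induction k using Fin.reverseInduction with
  | last => rw [kerFlag_last, finrank_top, Fin.val_last]
  | cast k ih =>
    have hker := finrank_inf_ker_add_one (linearIndependent_iff_kerFlag_not_le.1 ha k)
    rw [← kerFlag_castSucc] at hker
    rw [Fin.val_succ] at ih
    rw [Fin.val_castSucc]
    omega

open Classical in
theorem filter_kerFlag_eq_eq_piFinset {J : Type*} [Fintype J] {a : J → V →ₗ[K] K}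
    {f₀ : Fin m → J} (hf₀ : LinearIndependent K (a ∘ f₀)) :
    ({f | kerFlag (a ∘ f) = kerFlag (a ∘ f₀)} : Finset (Fin m → J)) =
      Fintype.piFinset fun k =>
        {i | kerFlag (a ∘ f₀) k.castSucc ≤ LinearMap.ker (a i) ∧
          ¬ kerFlag (a ∘ f₀) k.succ ≤ LinearMap.ker (a i)} := by
  ext f
  simp only [Finset.mem_filter, Finset.mem_univ, true_and, Fintype.mem_piFinset,
    kerFlag_eq_iff _ (kerFlag_last (a ∘ f₀))]
  exact forall_congr' fun k =>
    covBy_inf_eq_iff (linearIndependent_iff_kerFlag_covBy.1 hf₀ k)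

end KerFlag

section OrlikSolomon

theorem wedgeMon_eq_ιMulti {l m : ℕ} (f : Fin m → Fin l) :
    wedgeMon l m f = ιMulti ℂ m fun k => (Pi.single (f k) 1 : Fin l → ℂ) :=
  (ιMulti_apply _).symm

theorem wedgeMon_cons {l m : ℕ} (i : Fin l) (f : Fin m → Fin l) :
    wedgeMon l (m + 1) (Fin.cons i f) = xGen l i * wedgeMon l m f := by
  simp [wedgeMon, List.ofFn_succ]

theorem osBoundary_cons {l m : ℕ} (i : Fin l) (f : Fin (m + 1) → Fin l) :
    osBoundary l (m + 1) (Fin.cons i f) =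
      wedgeMon l (m + 1) f - xGen l i * osBoundary l m f := by
  have hdrop_zero : (Fin.cons i f : Fin (m + 2) → Fin l) ∘ Fin.succAbove 0 = f := by
    ext; simp
  have hdrop_succ (j : Fin (m + 1)) : (Fin.cons i f : Fin (m + 2) → Fin l) ∘ j.succ.succAbove =
      Fin.cons i (f ∘ j.succAbove) := by
    funext k
    cases k using Fin.cases <;> simp
  simp only [osBoundary, Fin.sum_univ_succ (n := m + 1), hdrop_zero, hdrop_succ, wedgeMon_cons,
    Finset.mul_sum, mul_smul_comm, Fin.val_zero, Fin.val_succ, pow_zero, pow_succ, one_smul,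
    mul_neg_one, neg_smul, Finset.sum_neg_distrib, sub_eq_add_neg]

variable {n l : ℕ} (α : Fin l → ((Fin (n + 1) → ℂ) →ₗ[ℂ] ℂ))

theorem osProj_osBoundary_of_not_linearIndependent {m : ℕ} {f : Fin (m + 1) → Fin l}
    (hf : ¬ LinearIndependent ℂ (α ∘ f)) : osProj n l α (osBoundary l m f) = 0 := by
  have hrel : osRel n l α (osBoundary l m f) 0 := ⟨Or.inl ⟨m, f, hf, rfl⟩, rfl⟩
  exact (RingQuot.mkAlgHom_rel ℂ hrel).trans (map_zero _)

theorem osProj_wedgeMon_eq_mul {m : ℕ} {i : Fin l} {f : Fin (m + 1) → Fin l}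
    (hi : kerFlag (α ∘ f) 0 ≤ LinearMap.ker (α i)) :
    osProj n l α (wedgeMon l (m + 1) f) =
      osProj n l α (xGen l i) * osProj n l α (osBoundary l m f) := by
  have hdep : ¬ LinearIndependent ℂ (α ∘ (Fin.cons i f : Fin (m + 2) → Fin l)) := by
    rw [Fin.comp_cons, linearIndependent_finCons, mem_span_range_iff_iInf_ker_le_ker,
      ← kerFlag_zero]
    exact fun h => h.2 hi
  have hzero := osProj_osBoundary_of_not_linearIndependent α hdep
  rwa [osBoundary_cons, map_sub, map_mul, sub_eq_zero] at hzero

theorem osProj_wedgeMon_of_not_linearIndependent {m : ℕ} {f : Fin m → Fin l}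
    (hf : ¬ LinearIndependent ℂ (α ∘ f)) : osProj n l α (wedgeMon l m f) = 0 := by
  cases m with
  | zero => exact absurd linearIndependent_empty_type hf
  | succ m =>
    rw [osProj_wedgeMon_eq_mul α (kerFlag_zero_le_ker (α ∘ f) 0),
      osProj_osBoundary_of_not_linearIndependent α hf, mul_zero]

open Classical in
/-- The class of the generator `x_i` of some hyperplane `H_i` containing `X`, or `0` if there is
no such hyperplane. What matters is that the choice of `i` depends on `X` only. -/
def hyperplaneClass (X : Submodule ℂ (Fin (n + 1) → ℂ)) : OSAlg n l α :=
  if h : ∃ i, X ≤ LinearMap.ker (α i) then osProj n l α (xGen l h.choose) else 0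

theorem osProj_wedgeMon_eq_hyperplaneClass_mul {m : ℕ} (f : Fin (m + 1) → Fin l) :
    osProj n l α (wedgeMon l (m + 1) f) =
      hyperplaneClass α (kerFlag (α ∘ f) 0) * osProj n l α (osBoundary l m f) := by
  have hex : ∃ i, kerFlag (α ∘ f) 0 ≤ LinearMap.ker (α i) := ⟨f 0, kerFlag_zero_le_ker (α ∘ f) 0⟩
  rw [hyperplaneClass, dif_pos hex]
  exact osProj_wedgeMon_eq_mul α hex.choose_spec

/-- The product of the classes of one hyperplane through each proper term of the chain `F`. -/
def flagMonomial {m : ℕ} (F : Fin (m + 1) → Submodule ℂ (Fin (n + 1) → ℂ)) : OSAlg n l α :=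
  (List.ofFn fun k : Fin m => hyperplaneClass α (F k.castSucc)).prod

theorem flagMonomial_kerFlag_succ {m : ℕ} (a : Fin (m + 1) → (Fin (n + 1) → ℂ) →ₗ[ℂ] ℂ) :
    flagMonomial α (kerFlag a) =
      hyperplaneClass α (kerFlag a 0) * flagMonomial α (kerFlag (a ∘ Fin.succ)) := by
  simp only [flagMonomial, List.ofFn_succ, List.prod_cons, Fin.castSucc_zero, Fin.castSucc_succ,
    kerFlag_succ]

theorem osProj_wedgeMon_eq_sum_flagMonomial {m : ℕ} (f : Fin m → Fin l) :
    osProj n l α (wedgeMon l m f) =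
      ∑ σ : Equiv.Perm (Fin m), ((σ.sign : ℤ) : ℂ) • flagMonomial α (kerFlag (α ∘ f ∘ σ)) := by
  induction m with
  | zero => simp [wedgeMon, flagMonomial]
  | succ m ih =>
    have hperm (σ : Equiv.Perm (Fin (m + 1))) : kerFlag (α ∘ f ∘ σ) 0 = kerFlag (α ∘ f) 0 := by
      simp only [kerFlag_zero]
      exact σ.iInf_comp (g := fun j => LinearMap.ker (α (f j)))
    calc osProj n l α (wedgeMon l (m + 1) f)
        = hyperplaneClass α (kerFlag (α ∘ f) 0) * ∑ j : Fin (m + 1), (-1 : ℂ) ^ (j : ℕ) •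
            ∑ σ : Equiv.Perm (Fin m), ((σ.sign : ℤ) : ℂ) •
              flagMonomial α (kerFlag (α ∘ f ∘ j.succAbove ∘ σ)) := by
          simp only [osProj_wedgeMon_eq_hyperplaneClass_mul, osBoundary, map_sum, map_smul, ih,
            Function.comp_assoc]
      _ = hyperplaneClass α (kerFlag (α ∘ f) 0) * ∑ τ : Equiv.Perm (Fin (m + 1)),
            ((τ.sign : ℤ) : ℂ) • flagMonomial α (kerFlag (α ∘ f ∘ τ ∘ Fin.succ)) := by
          rw [sum_perm_succ f fun g => flagMonomial α (kerFlag (α ∘ g))]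
      _ = _ := by
          simp only [flagMonomial_kerFlag_succ, hperm, Finset.mul_sum, mul_smul_comm,
            Function.comp_assoc]

open Classical in
theorem osProj_ιMulti_eq_sum_flagMonomial {m : ℕ} (w : Matrix (Fin m) (Fin l) ℂ) :
    osProj n l α (ιMulti ℂ m w.row) =
      ∑ f : Fin m → Fin l with LinearIndependent ℂ (α ∘ f),
        (w.submatrix id f).det • flagMonomial α (kerFlag (α ∘ f)) := by
  let E (f : Fin m → Fin l) : OSAlg n l α :=
    if LinearIndependent ℂ (α ∘ f) then flagMonomial α (kerFlag (α ∘ f)) else 0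
  have hE (f : Fin m → Fin l) : osProj n l α (wedgeMon l m f) =
      ∑ σ : Equiv.Perm (Fin m), ((σ.sign : ℤ) : ℂ) • E (f ∘ σ) := by
    have hperm (σ : Equiv.Perm (Fin m)) :
        LinearIndependent ℂ (α ∘ f ∘ σ) ↔ LinearIndependent ℂ (α ∘ f) :=
      linearIndependent_equiv σ (f := α ∘ f)
    by_cases hf : LinearIndependent ℂ (α ∘ f)
    · simp only [E, hperm, if_pos hf, osProj_wedgeMon_eq_sum_flagMonomial]
    · simp only [E, hperm, if_neg hf, osProj_wedgeMon_of_not_linearIndependent α hf, smul_zero,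
        Finset.sum_const_zero]
  calc osProj n l α (ιMulti ℂ m w.row)
      = ∑ f : Fin m → Fin l, (∏ i, w i (f i)) • osProj n l α (wedgeMon l m f) := by
        rw [← AlternatingMap.coe_multilinearMap, multilinearMap_apply_eq_sum_prod_smul]
        simp only [AlternatingMap.coe_multilinearMap, map_sum, map_smul, wedgeMon_eq_ιMulti,
          Matrix.row_apply]
    _ = ∑ f : Fin m → Fin l, (w.submatrix id f).det • E f := by
        simp only [hE]
        exact sum_prod_smul_sum_perm w E
    _ = _ := by simp only [E, smul_ite, smul_zero, Finset.sum_filter]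

open Classical in
theorem osProj_ιMulti_eq_zero_of_sum_det_eq_zero {m : ℕ} {w : Matrix (Fin m) (Fin l) ℂ}
    (hw : ∀ f₀ : Fin m → Fin l, LinearIndependent ℂ (α ∘ f₀) →
      ∑ f : Fin m → Fin l with kerFlag (α ∘ f) = kerFlag (α ∘ f₀), (w.submatrix id f).det = 0) :
    osProj n l α (ιMulti ℂ m w.row) = 0 := by
  rw [osProj_ιMulti_eq_sum_flagMonomial, ← Finset.sum_fiberwise_of_maps_to
    (g := fun f : Fin m → Fin l => kerFlag (α ∘ f))
    fun f hf => Finset.mem_image_of_mem (fun f => kerFlag (α ∘ f)) hf]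
  refine Finset.sum_eq_zero fun F hF => ?_
  obtain ⟨f₀, hf₀, rfl⟩ := Finset.mem_image.1 hF
  have hf₀ : LinearIndependent ℂ (α ∘ f₀) := (Finset.mem_filter.1 hf₀).2
  have hfiber : ∀ f : Fin m → Fin l, LinearIndependent ℂ (α ∘ f) ∧
      kerFlag (α ∘ f) = kerFlag (α ∘ f₀) ↔ kerFlag (α ∘ f) = kerFlag (α ∘ f₀) := fun f => by
    rw [and_iff_right_of_imp]
    intro h
    rwa [linearIndependent_iff_kerFlag_covBy, h, ← linearIndependent_iff_kerFlag_covBy]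
  rw [Finset.filter_filter, Finset.sum_congr (Finset.filter_congr fun f _ => hfiber f)
    fun f hf => by rw [(Finset.mem_filter.1 hf).2], ← Finset.sum_smul, hw f₀ hf₀, zero_smul]

open Classical in
theorem sum_col_eq_flatVec_sub_flatVec (M : Matrix (Fin n) (Fin l) ℂ)
    {P Q : Submodule ℂ (Fin (n + 1) → ℂ)} (h : P ≤ Q) :
    ∑ i with P ≤ LinearMap.ker (α i) ∧ ¬ Q ≤ LinearMap.ker (α i), M.col i =
      flatVec n l α M P - flatVec n l α M Q := by
  rw [eq_sub_iff_add_eq, add_comm, flatVec, flatVec,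
    ← Finset.sum_filter_add_sum_filter_not
    ({i | P ≤ LinearMap.ker (α i)} : Finset (Fin l)) (fun i => Q ≤ LinearMap.ker (α i)),
    Finset.filter_filter, Finset.filter_filter]
  congr 1
  refine Finset.sum_congr (Finset.filter_congr fun i _ => ?_) fun i _ => rfl
  exact ⟨fun hQ => ⟨h.trans hQ, hQ⟩, And.right⟩

theorem flatVec_top {α : Fin l → ((Fin (n + 1) → ℂ) →ₗ[ℂ] ℂ)} (hα : ∀ i, α i ≠ 0)
    (M : Matrix (Fin n) (Fin l) ℂ) : flatVec n l α M ⊤ = 0 := by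
  simp [flatVec, top_le_iff, LinearMap.ker_eq_top, hα]

theorem osProj_ιMulti_eq_zero_of_finrank_flatVec_lt {α : Fin l → ((Fin (n + 1) → ℂ) →ₗ[ℂ] ℂ)}
    (hα : ∀ i, α i ≠ 0) {M : Matrix (Fin n) (Fin l) ℂ}
    (hM : ∀ f : Fin n → Fin l, LinearIndependent ℂ (α ∘ f) →
      Set.finrank ℂ (Set.range fun k : Fin n => flatVec n l α M (kerFlag (α ∘ f) k.castSucc)) < n) :
    osProj n l α (ιMulti ℂ n M.row) = 0 := by
  classical
  refine osProj_ιMulti_eq_zero_of_sum_det_eq_zero α fun f₀ hf₀ => ?_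
  rw [filter_kerFlag_eq_eq_piFinset hf₀, sum_piFinset_det_submatrix]
  simp only [sum_col_eq_flatVec_sub_flatVec α M (kerFlag_mono _ (Fin.castSucc_le_succ _))]
  rw [← finrank_range_lt_card_iff_det_eq_zero, Fintype.card_fin]
  refine (Submodule.finrank_mono (Submodule.span_le.2 ?_)).trans_lt (hM f₀ hf₀)
  have hmem (k : Fin (n + 1)) : flatVec n l α M (kerFlag (α ∘ f₀) k) ∈ Submodule.span ℂ
      (Set.range fun k : Fin n => flatVec n l α M (kerFlag (α ∘ f₀) k.castSucc)) := by
    cases k using Fin.lastCases with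
    | last => simp [kerFlag_last, flatVec_top hα]
    | cast k => exact Submodule.subset_span ⟨k, rfl⟩
  rintro _ ⟨k, rfl⟩
  exact Submodule.sub_mem _ (hmem _) (hmem _)

theorem arrFlat_image_Ici {m : ℕ} (f : Fin m → Fin l) (k : Fin m) :
    arrFlat n l α ((Finset.Ici k).image f) = kerFlag (α ∘ f) k.castSucc := by
  simp only [arrFlat, kerFlag, Finset.iInf_finset_image, Finset.mem_Ici,
    Fin.castSucc_le_castSucc_iff, Function.comp_apply]

theorem finrank_arrFlat_image_Ici {f : Fin n → Fin l} (hf : LinearIndependent ℂ (α ∘ f))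
    (k : Fin n) : Module.finrank ℂ (arrFlat n l α ((Finset.Ici k).image f)) = k + 1 := by
  have hrank := finrank_kerFlag_add hf k.castSucc
  rw [Module.finrank_fin_fun, Fin.val_castSucc] at hrank
  rw [arrFlat_image_Ici]
  omega

open Classical in
/-- The linear map sending `w ∈ ℂ^l` to the vector of its sums over the hyperplanes containing
`F k`. It turns the rows of a coefficient matrix into those of the matrix with columns `v_{F k}`. -/
def flagMap {m : ℕ} (F : Fin m → Submodule ℂ (Fin (n + 1) → ℂ)) :
    (Fin l → ℂ) →ₗ[ℂ] (Fin m → ℂ) :=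
  LinearMap.pi fun k => ∑ i with F k ≤ LinearMap.ker (α i), LinearMap.proj i

theorem flagMap_row {m : ℕ} (F : Fin m → Submodule ℂ (Fin (n + 1) → ℂ))
    (M : Matrix (Fin n) (Fin l) ℂ) (r : Fin n) (k : Fin m) :
    flagMap α F (M.row r) k = flatVec n l α M (F k) r := by
  simp [flagMap, flatVec]

open Classical in
theorem flagMap_single {m : ℕ} (F : Fin m → Submodule ℂ (Fin (n + 1) → ℂ)) (i : Fin l)
    (k : Fin m) :
    flagMap α F (Pi.single i 1) k = if F k ≤ LinearMap.ker (α i) then 1 else 0 := by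
  simp [flagMap, Pi.single_apply, Finset.sum_ite_eq']

variable {α}

theorem linearIndependent_of_injective_flagMap_single (hα : ∀ i, α i ≠ 0) {d : ℕ}
    {G : Fin (d + 1) → Submodule ℂ (Fin (n + 1) → ℂ)} (hG : Monotone G)
    (hlast : G (Fin.last d) = ⊤) {m : ℕ} {f : Fin m → Fin l}
    (hf : Function.Injective fun j => flagMap α (G ∘ Fin.castSucc) (Pi.single (f j) 1)) :
    LinearIndependent ℂ (α ∘ f) := by
  classical
  choose t ht using fun i => exists_forall_le_ker_iff_lt (hα i) hG hlast
  refine linearIndependent_of_filtration (α ∘ f) (t := t ∘ f) (fun j j' hjj' => hf ?_) G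
    (fun j => ?_) fun j j' => (ht (f j') _).2
  · have htt : t (f j) = t (f j') := hjj'
    ext k
    simp only [flagMap_single, Function.comp_apply, ht, htt]
  · exact fun h => lt_irrefl _ ((ht (f j) _).1 h)

theorem map_flagMap_eq_of_osRel (hα : ∀ i, α i ≠ 0) {d : ℕ}
    {G : Fin (d + 1) → Submodule ℂ (Fin (n + 1) → ℂ)} (hG : Monotone G)
    (hlast : G (Fin.last d) = ⊤) (hbot : G 0 ≠ ⊥) {p q : ExteriorAlgebra ℂ (Fin l → ℂ)}
    (hpq : osRel n l α p q) :
    ExteriorAlgebra.map (flagMap α (G ∘ Fin.castSucc)) p =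
      ExteriorAlgebra.map (flagMap α (G ∘ Fin.castSucc)) q := by
  classical
  let y (i : Fin l) : Fin d → ℂ := flagMap α (G ∘ Fin.castSucc) (Pi.single i 1)
  have hmap {m : ℕ} (f : Fin m → Fin l) :
      ExteriorAlgebra.map (flagMap α (G ∘ Fin.castSucc)) (wedgeMon l m f) =
        ιMulti ℂ m (y ∘ f) := by
    rw [wedgeMon_eq_ιMulti, map_apply_ιMulti]
    rfl
  obtain ⟨⟨m, f, hf, rfl⟩ | ⟨m, f, hf, rfl⟩, rfl⟩ := hpq
  · rw [map_zero, osBoundary, map_sum]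
    simp only [map_smul, hmap]
    exact sum_neg_one_pow_smul_map_comp_succAbove_eq_zero (v := y ∘ f) (ιMulti ℂ m)
      (mt (linearIndependent_of_injective_flagMap_single hα hG hlast) hf)
  · obtain ⟨j, hj⟩ : ∃ j, ¬ G 0 ≤ LinearMap.ker (α (f j)) := by
      by_contra! hle
      exact hbot (le_bot_iff.1 (hf ▸ le_iInf hle))
    have hzero : y (f j) = 0 := by
      ext k
      have hk : ¬ G k.castSucc ≤ LinearMap.ker (α (f j)) :=
        fun hle => hj ((hG (Fin.zero_le _)).trans hle)
      simp [y, flagMap_single, hk]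
    rw [map_zero, hmap]
    exact (ιMulti ℂ m).map_coord_zero j hzero

theorem finrank_flatVec_lt_of_osProj_ιMulti_eq_zero (hα : ∀ i, α i ≠ 0)
    {M : Matrix (Fin n) (Fin l) ℂ} (hM : osProj n l α (ιMulti ℂ n M.row) = 0)
    {G : Fin (n + 1) → Submodule ℂ (Fin (n + 1) → ℂ)} (hG : Monotone G)
    (hlast : G (Fin.last n) = ⊤) (hbot : G 0 ≠ ⊥) :
    Set.finrank ℂ (Set.range fun k : Fin n => flatVec n l α M (G k.castSucc)) < n := by
  set L := flagMap α (G ∘ Fin.castSucc)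
  have hι : ιMulti ℂ n (L ∘ M.row) = 0 := by
    rw [← map_apply_ιMulti, ← RingQuot.liftAlgHom_mkAlgHom_apply ℂ (ExteriorAlgebra.map L)
      (fun _ _ => map_flagMap_eq_of_osRel hα hG hlast hbot)]
    exact (congrArg _ hM).trans (map_zero _)
  have hdet : (Matrix.of fun k : Fin n => flatVec n l α M (G k.castSucc)).det = 0 := by
    rw [← Matrix.det_transpose, ← alternatingMap_apply_eq_zero_of_ιMulti_eq_zero hι
      Matrix.detRowAlternating]
    exact congrArg Matrix.det (Matrix.ext fun r k => (flagMap_row α (G ∘ Fin.castSucc) M r k).symm)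
  simpa using (finrank_range_lt_card_iff_det_eq_zero _).2 hdet

theorem osProj_ιMulti_eq_zero_of_mem_span {m : ℕ} {v w : Fin m → Fin l → ℂ}
    (hv : osProj n l α (ιMulti ℂ m v) = 0) (hw : ∀ i, w i ∈ Submodule.span ℂ (Set.range v)) :
    osProj n l α (ιMulti ℂ m w) = 0 :=
  alternatingMap_apply_eq_zero_of_mem_span
    ((osProj n l α).toLinearMap.compAlternatingMap (ιMulti ℂ m)) hv hw

end OrlikSolomon

/-- Flag condition for isotropic subspaces: the subspace `V ⊆ ℂ^l` (the degree-one part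
of the Orlik–Solomon algebra) spanned by the rows of `M` is `n`-isotropic if and only if
for every complete flag `S_n ⊇ ⋯ ⊇ S_1` of flats, the decorating vectors
`v_{S_1},…,v_{S_n}` span a subspace of `ℂ^n` of dimension strictly less than `n`. -/
theorem stmt_12 (n l : ℕ) (hn : 1 ≤ n)
    (α : Fin l → ((Fin (n + 1) → ℂ) →ₗ[ℂ] ℂ)) (hα : ∀ i, α i ≠ 0)
    (M : Matrix (Fin n) (Fin l) ℂ) :
    ((∀ w : Fin n → (Fin l → ℂ),
        (∀ i, w i ∈ Submodule.span ℂ (Set.range fun r : Fin n => (M r : Fin l → ℂ))) →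
        osProj n l α ((List.ofFn fun i : Fin n => ι ℂ (w i)).prod) = 0)
      ↔
      (∀ F : Fin n → Finset (Fin l),
        (∀ k : Fin n, Module.finrank ℂ (arrFlat n l α (F k)) = (k : ℕ) + 1) →
        (∀ k k' : Fin n, k ≤ k' → arrFlat n l α (F k) ≤ arrFlat n l α (F k')) →
        Module.finrank ℂ (Submodule.span ℂ
          (Set.range fun k : Fin n => flatVec n l α M (arrFlat n l α (F k)))) < n)) := by
  have hprod (w : Fin n → Fin l → ℂ) :
      (List.ofFn fun i : Fin n => ι ℂ (w i)).prod = ιMulti ℂ n w := (ιMulti_apply w).symm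
  simp only [hprod]
  constructor
  · intro h F hF hmono
    have hM := h M.row fun i => Submodule.subset_span ⟨i, rfl⟩
    have hbot (k : Fin n) : arrFlat n l α (F k) ≠ ⊥ :=
      Submodule.one_le_finrank_iff.1 (by rw [hF]; omega)
    have hlt := finrank_flatVec_lt_of_osProj_ιMulti_eq_zero hα hM
      (monotone_snoc_top hmono) (Fin.snoc_last _ _) (snoc_top_ne_bot hbot 0)
    simpa only [Fin.snoc_castSucc] using! hlt
  · intro h w hw
    refine osProj_ιMulti_eq_zero_of_mem_span (osProj_ιMulti_eq_zero_of_finrank_flatVec_lt hα ?_) hw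
    intro f hf
    simp only [← arrFlat_image_Ici α f]
    refine h _ (finrank_arrFlat_image_Ici α hf) fun k k' hkk' => ?_
    simpa only [arrFlat_image_Ici] using kerFlag_mono _ (Fin.castSucc_le_castSucc_iff.2 hkk')

end
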